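/- ε-solution guarantee for convex Decentralized Cubic Newton (Theorem 1, small-accuracy case): assume each f_i is convex, let x* be a global minimizer of f, let ε > 0 satisfy ε ≤ 12(L + L̄₂)D³ with L ≥ L̄₂, set N = ⌈√(108(L + L̄₂)D³/ε)⌉ − 2 and γ = √((N+1)(N+2))/(6D). Suppose for every k = 0,…,N the per-iteration consensus errors satisfy Δ̂_g^k ≤ (√2/144)·ε/D, Δ̂_H^k ≤ (√3/72)·√(ε(L + L̄₂)/D), and Δ̂_x^k ≤ min{ √2·ε/(288·L̄₁·D), √(3ε(L + L̄₂))/(144·L̄₂·√D), √ε/(3√((L + L̄₂)D)) }, and take δ₁ = (√2/72)·ε/D and δ₂ = (√3/36)·√(ε(L + L̄₂)/D) in the cubic model. Suppose also ‖x̄^k − x*‖ ≤ D for all k = 0,…,N. Then f(x̄^{N+1}) − f(x*) ≤ ε. -/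

import Mathlib

/-!
Every node takes an inexact cubic Newton step at its own approximate average `z`. Because the nodes'
points are close to each other, the vectors and maps it uses differ from the gradient and Hessian
of the objective `F` at `z` by at most `δ₁` and `δ₂`. Together with the second-order Taylor
estimate (`taylor_two_abs_le`), this shows that the regularized model plus `F z` majorizes `F` and
overshoots it by a controlled amount, so the minimizer of the model is almost as good as any
competitor (`cubic_step_le`).

Taking the competitor `(1 - α) x̄ᵏ + α x*` with `α = 3 / (k + 3)`, using convexity of `F` along
the segment and Jensen's inequality over the nodes, yields a recursion for `F x̄ᵏ - F x*` in which
the distance from the competitor to `z` is at most `α D + Δ`, where `Δ` bounds the consensus error.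
The weights `(k + 1)(k + 2)(k + 3)` make this recursion telescope (`weighted_recursion`), and
the choice of `N` makes the accumulated error at most `ε` (`final_numeric`).
-/

open scoped RealInnerProductSpace
open Finset

/-- The Hessian of `f : E → ℝ` at `x`, as a continuous linear map `E →L[ℝ] E`
(the derivative of the gradient). Its norm is the operator norm. -/
noncomputable def hess {E : Type*} [NormedAddCommGroup E] [InnerProductSpace ℝ E]
    [FiniteDimensional ℝ E] (f : E → ℝ) (x : E) : E →L[ℝ] E :=
  fderiv ℝ (gradient f) x

/-! ### A single inexact cubic step -/

/-- Second-order Taylor estimate, the remainder being controlled by a Lipschitz constant of the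
Hessian. -/
lemma taylor_two_abs_le {E : Type*} [NormedAddCommGroup E] [InnerProductSpace ℝ E]
    [FiniteDimensional ℝ E] {f : E → ℝ} (hf : ContDiff ℝ 2 f) {K : ℝ}
    (hK : ∀ x y : E, ‖hess f x - hess f y‖ ≤ K * ‖x - y‖) (x s : E) :
    |f (x + s) - f x - ⟪gradient f x, s⟫ - (1 / 2) * ⟪hess f x s, s⟫| ≤ K / 6 * ‖s‖ ^ 3 := by
  have hgd : Differentiable ℝ (gradient f) := by
    have h1 : ContDiff ℝ 1 (fderiv ℝ f) := hf.fderiv_right (by norm_num)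
    have h2 : ContDiff ℝ 1 (gradient f) :=
      (InnerProductSpace.toDual ℝ E).symm.toContinuousLinearEquiv.contDiff.comp h1
    exact h2.differentiable (by norm_num)
  have hline : ∀ t : ℝ, HasDerivAt (fun t : ℝ => x + t • s) s t := by
    intro t
    simpa using ((hasDerivAt_id t).smul_const s).const_add x
  have hg' : ∀ t : ℝ, HasDerivAt (fun t : ℝ => gradient f (x + t • s))
      (hess f (x + t • s) s) t := by
    intro t
    have h : HasFDerivAt (gradient f) (hess f (x + t • s)) (x + t • s) :=
      (hgd (x + t • s)).hasFDerivAt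
    exact h.comp_hasDerivAt t (hline t)
  have hf' : ∀ t : ℝ, HasDerivAt (fun t : ℝ => f (x + t • s))
      ⟪gradient f (x + t • s), s⟫ t := by
    intro t
    have h := ((hf.differentiable (by norm_num)) (x + t • s)).hasGradientAt.hasFDerivAt
    have hcomp := h.comp_hasDerivAt t (hline t)
    rw [InnerProductSpace.toDual_apply_apply] at hcomp
    exact hcomp
  -- first-order estimate for the gradient along the segment
  have hgrad : ∀ t ∈ Set.Icc (0 : ℝ) 1,
      ‖gradient f (x + t • s) - gradient f x - t • hess f x s‖ ≤ K * ‖s‖ ^ 2 * (t ^ 2 / 2) := by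
    have hd : ∀ t : ℝ, HasDerivAt
        (fun t : ℝ => gradient f (x + t • s) - gradient f x - t • hess f x s)
        (hess f (x + t • s) s - hess f x s) t := by
      intro t
      exact (((hg' t).sub_const (gradient f x)).sub
        ((hasDerivAt_id t).smul_const (hess f x s))).congr_deriv (by simp)
    refine image_norm_le_of_norm_deriv_right_le_deriv_boundary
      (f' := fun t => hess f (x + t • s) s - hess f x s)
      (B' := fun t => K * ‖s‖ ^ 2 * t)
      (fun t _ => (hd t).continuousAt.continuousWithinAt)
      (fun t _ => (hd t).hasDerivWithinAt) (by simp) ?_ ?_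
    · intro t
      exact (((hasDerivAt_id t).pow 2).div_const 2).const_mul (K * ‖s‖ ^ 2)
        |>.congr_deriv (by simp)
    · intro t ht
      calc ‖hess f (x + t • s) s - hess f x s‖
          = ‖(hess f (x + t • s) - hess f x) s‖ := by simp
        _ ≤ ‖hess f (x + t • s) - hess f x‖ * ‖s‖ := ContinuousLinearMap.le_opNorm _ _
        _ ≤ K * ‖(x + t • s) - x‖ * ‖s‖ := by gcongr; exact hK _ _
        _ = K * ‖s‖ ^ 2 * t := by
          rw [add_sub_cancel_left, norm_smul, Real.norm_of_nonneg ht.1]; ring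
  have hd : ∀ t : ℝ, HasDerivAt
      (fun t : ℝ => f (x + t • s) - f x - t * ⟪gradient f x, s⟫
        - (t ^ 2 / 2) * ⟪hess f x s, s⟫)
      (⟪gradient f (x + t • s) - gradient f x - t • hess f x s, s⟫) t := by
    intro t
    exact (((hf' t).sub_const (f x)).sub
      ((hasDerivAt_id t).mul_const ⟪gradient f x, s⟫)).sub
      ((((hasDerivAt_id t).pow 2).div_const 2).mul_const ⟪hess f x s, s⟫)
      |>.congr_deriv (by simp [inner_sub_left, inner_smul_left])
  have key := image_norm_le_of_norm_deriv_right_le_deriv_boundary (a := (0 : ℝ)) (b := 1)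
      (B := fun t => K * ‖s‖ ^ 3 * (t ^ 3 / 6)) (B' := fun t => K * ‖s‖ ^ 3 * (t ^ 2 / 2))
      (fun t _ => (hd t).continuousAt.continuousWithinAt)
      (fun t _ => (hd t).hasDerivWithinAt) (by simp) (by
        intro t
        exact (((hasDerivAt_id t).pow 3).div_const 6).const_mul (K * ‖s‖ ^ 3)
          |>.congr_deriv (by simp only [id]; push_cast; ring)) (by
        intro t ht
        calc ‖⟪gradient f (x + t • s) - gradient f x - t • hess f x s, s⟫‖
            ≤ ‖gradient f (x + t • s) - gradient f x - t • hess f x s‖ * ‖s‖ :=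
              norm_inner_le_norm _ _
          _ ≤ K * ‖s‖ ^ 2 * (t ^ 2 / 2) * ‖s‖ := by
              gcongr; exact hgrad t ⟨ht.1, ht.2.le⟩
          _ = K * ‖s‖ ^ 3 * (t ^ 2 / 2) := by ring)
      (x := 1) (by simp)
  simp only [one_smul, one_mul, one_pow, Real.norm_eq_abs] at key
  calc _ ≤ _ := key
    _ = _ := by ring

/-- One inexact cubic step. The model error is at most `δ₁‖s‖ + δ₂‖s‖²/2 + K‖s‖³/6`, and
`δ₁‖s‖ ≤ δ₁/(2γ) + γδ₁‖s‖²/2`; hence the model (plus `F z`) majorizes `F`, and exceeds it by at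
most the stated error at every competitor `y`. -/
lemma cubic_step_le {E : Type*} [NormedAddCommGroup E] [InnerProductSpace ℝ E]
    {F : E → ℝ} {z G g : E} {A H : E →L[ℝ] E} {K L δ1 δ2 γ : ℝ}
    (hT : ∀ s, |F (z + s) - F z - ⟪G, s⟫ - (1 / 2) * ⟪A s, s⟫| ≤ K / 6 * ‖s‖ ^ 3)
    (hg : ‖g - G‖ ≤ δ1) (hH : ‖H - A‖ ≤ δ2) (hγ : 0 < γ) (hKL : K ≤ L)
    {ω : E → ℝ}
    (hω : ∀ y, ω y = ⟪g, y - z⟫ + (1 / 2) * ⟪H (y - z), y - z⟫ + δ1 / (2 * γ)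
        + ((γ * δ1 + δ2) / 2) * ‖y - z‖ ^ 2 + (L / 6) * ‖y - z‖ ^ 3)
    {p : E} (hp : ∀ y, ω p ≤ ω y) (y : E) :
    F p ≤ F y + δ1 / γ + (γ * δ1 + δ2) * ‖y - z‖ ^ 2 + (L + K) / 6 * ‖y - z‖ ^ 3 := by
  have hδ1 : 0 ≤ δ1 := (norm_nonneg _).trans hg
  have herr : ∀ u, |F u - F z - ⟪g, u - z⟫ - (1 / 2) * ⟪H (u - z), u - z⟫| ≤
      δ1 / (2 * γ) + (γ * δ1 + δ2) / 2 * ‖u - z‖ ^ 2 + K / 6 * ‖u - z‖ ^ 3 := by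
    intro u
    have h0 := hT (u - z)
    rw [add_sub_cancel] at h0
    have h1 : |⟪g - G, u - z⟫| ≤ δ1 * ‖u - z‖ :=
      (abs_real_inner_le_norm _ _).trans (by gcongr)
    have h2 : |⟪(H - A) (u - z), u - z⟫| ≤ δ2 * ‖u - z‖ * ‖u - z‖ :=
      (abs_real_inner_le_norm _ _).trans (by
        gcongr
        exact (ContinuousLinearMap.le_opNorm _ _).trans (by gcongr))
    have h3 : δ1 * ‖u - z‖ ≤ δ1 / (2 * γ) + γ * δ1 / 2 * ‖u - z‖ ^ 2 := by
      have h4 : δ1 / (2 * γ) + γ * δ1 / 2 * ‖u - z‖ ^ 2 - δ1 * ‖u - z‖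
          = δ1 / (2 * γ) * (1 - γ * ‖u - z‖) ^ 2 := by field_simp; ring
      have h5 : 0 ≤ δ1 / (2 * γ) * (1 - γ * ‖u - z‖) ^ 2 := by positivity
      linarith
    rw [inner_sub_left] at h1
    rw [sub_apply, inner_sub_left] at h2
    rw [abs_le] at *
    constructor <;> nlinarith
  have hu := (abs_le.1 (herr p)).2
  have hl := (abs_le.1 (herr y)).1
  have hpy := hp y
  rw [hω, hω] at hpy
  have hK3 : K / 6 * ‖p - z‖ ^ 3 ≤ L / 6 * ‖p - z‖ ^ 3 := by gcongr
  have h2γ : δ1 / γ = 2 * (δ1 / (2 * γ)) := by field_simp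
  rw [h2γ]
  linarith

/-! ### Accumulation of the errors -/

/-- Unrolled one-step recursion for the step sizes `3/(k+3)`: the weights `(k+1)(k+2)(k+3)`
telescope. -/
lemma weighted_recursion {a : ℕ → ℝ} {N : ℕ} {C P Q : ℝ} (hP : 0 ≤ P) (hQ : 0 ≤ Q)
    (h : ∀ k ≤ N, a (k + 1) ≤ (1 - 3 / ((k : ℝ) + 3)) * a k + C + P * (3 / ((k : ℝ) + 3)) ^ 2
      + Q * (3 / ((k : ℝ) + 3)) ^ 3) :
    ∀ k ≤ N, ((k : ℝ) + 1) * (k + 2) * (k + 3) * a (k + 1) ≤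
      C * (((k : ℝ) + 1) * (k + 2) * (k + 3) * (k + 4) / 4)
        + 9 * P * (((k : ℝ) + 1) * (k + 2) / 2) + 27 * Q * (k + 1) := by
  have hw : ∀ k ≤ N, ((k : ℝ) + 1) * (k + 2) * (k + 3) * a (k + 1) ≤
      (k : ℝ) * (k + 1) * (k + 2) * a k + C * (((k : ℝ) + 1) * (k + 2) * (k + 3))
        + 9 * P * (k + 1) + 27 * Q := by
    intro k hk
    have hk0 : (0 : ℝ) ≤ k := Nat.cast_nonneg k
    have h1 := mul_le_mul_of_nonneg_left (h k hk)
      (by positivity : 0 ≤ ((k : ℝ) + 1) * (k + 2) * (k + 3))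
    have e2 : ((k : ℝ) + 1) * (k + 2) * (k + 3) * (3 / ((k : ℝ) + 3)) ^ 2 ≤ 9 * (k + 1) := by
      have : ((k : ℝ) + 1) * (k + 2) * (k + 3) * (3 / ((k : ℝ) + 3)) ^ 2
          = 9 * (k + 1) * ((k + 2) / (k + 3)) := by field_simp; ring
      rw [this]
      have h' : ((k : ℝ) + 2) / (k + 3) ≤ 1 := by rw [div_le_one (by positivity)]; linarith
      nlinarith
    have e3 : ((k : ℝ) + 1) * (k + 2) * (k + 3) * (3 / ((k : ℝ) + 3)) ^ 3 ≤ 27 := by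
      have : ((k : ℝ) + 1) * (k + 2) * (k + 3) * (3 / ((k : ℝ) + 3)) ^ 3
          = 27 * (((k + 1) * (k + 2)) / (k + 3) ^ 2) := by field_simp; ring
      rw [this]
      have h' : (((k : ℝ) + 1) * (k + 2)) / (k + 3) ^ 2 ≤ 1 := by
        rw [div_le_one (by positivity)]; nlinarith
      linarith
    have e1 : ((k : ℝ) + 1) * (k + 2) * (k + 3) * (1 - 3 / ((k : ℝ) + 3))
        = (k : ℝ) * (k + 1) * (k + 2) := by field_simp; ring
    have f2 := mul_le_mul_of_nonneg_left e2 hP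
    have f3 := mul_le_mul_of_nonneg_left e3 hQ
    calc _ ≤ _ := h1
      _ = (((k : ℝ) + 1) * (k + 2) * (k + 3) * (1 - 3 / ((k : ℝ) + 3))) * a k
          + C * (((k : ℝ) + 1) * (k + 2) * (k + 3))
          + P * (((k : ℝ) + 1) * (k + 2) * (k + 3) * (3 / ((k : ℝ) + 3)) ^ 2)
          + Q * (((k : ℝ) + 1) * (k + 2) * (k + 3) * (3 / ((k : ℝ) + 3)) ^ 3) := by ring
      _ ≤ _ := by rw [e1]; linarith
  intro k
  induction k with
  | zero =>
    intro hk
    have := hw 0 hk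
    norm_num at this ⊢
    linarith
  | succ k ih =>
    intro hk
    have h1 := ih (by omega)
    have h2 := hw (k + 1) hk
    push_cast at h2 ⊢
    linarith

/-- The numerical estimate behind the choice of `N`, in the normalization `S² = 108 M D³ / ε`
(so `n + 1 ≤ S ≤ n + 2`), `T = √((n+1)(n+2))`, and `q` the bound on the consensus error relative
to `D`. -/
lemma final_numeric {n S T q r : ℝ} (hn : 1 ≤ n) (hS1 : n + 1 ≤ S) (hS2 : S ≤ n + 2)
    (hT1 : n + 1 ≤ T) (hT2 : T ≤ n + 2) (hr0 : 0 ≤ r) (hr : r ≤ 3 / 2) (hq0 : 0 ≤ q)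
    (hq : q ^ 2 * S ^ 2 = 12) :
    (r / (12 * T) + 2 * (T * r / 432 + S / 216) * q ^ 2 + 4 * (S ^ 2 / 108) / 6 * q ^ 3)
        * ((n + 1) * (n + 2) * (n + 3) * (n + 4) / 4)
      + 9 * (2 * (T * r / 432 + S / 216)) * ((n + 1) * (n + 2) / 2)
      + 27 * (4 * (S ^ 2 / 108) / 6) * (n + 1) ≤ (n + 1) * (n + 2) * (n + 3) := by
  have hn1 : 0 < n + 1 := by linarith
  have hSpos : 0 < S := by linarith
  have hTpos : 0 < T := by linarith
  have hqS : q * S ≤ 4 := by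
    by_contra hcon
    push Not at hcon
    nlinarith
  have hqn : q ≤ 4 / (n + 1) := by
    rw [le_div_iff₀ hn1]; nlinarith
  have hq2 : q ^ 2 ≤ 12 / (n + 1) ^ 2 := by
    rw [le_div_iff₀ (by positivity), ← hq]
    gcongr
  have hTr : T * r ≤ (n + 2) * (3 / 2) := by gcongr
  have hG : T * r / 432 + S / 216 ≤ 7 / 864 * (n + 2) := by linarith
  have hG0 : 0 ≤ T * r / 432 + S / 216 := by positivity
  have hA : r / (12 * T) ≤ (1 / 8) / (n + 1) := by
    rw [div_le_div_iff₀ (by positivity) hn1]; nlinarith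
  have hB : (T * r / 432 + S / 216) * q ^ 2 ≤ (7 / 48) / (n + 1) := by
    calc (T * r / 432 + S / 216) * q ^ 2 ≤ 7 / 864 * (n + 2) * (12 / (n + 1) ^ 2) := by gcongr
      _ ≤ (7 / 48) / (n + 1) := by
        rw [mul_div_assoc', div_le_div_iff₀ (by positivity) hn1]
        nlinarith [sq_nonneg (n + 1)]
  have hS2' : S ^ 2 ≤ (n + 2) ^ 2 := by gcongr
  have hCq : 4 * (S ^ 2 / 108) / 6 * q ^ 3 ≤ (8 / 27) / (n + 1) := by
    have : 4 * (S ^ 2 / 108) / 6 * q ^ 3 = (q ^ 2 * S ^ 2) * q * (1 / 162) := by ring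
    rw [this, hq]
    have : (8 / 27) / (n + 1) = 12 * (4 / (n + 1)) * (1 / 162) := by ring
    rw [this]
    gcongr
  have hsum : r / (12 * T) + 2 * (T * r / 432 + S / 216) * q ^ 2 + 4 * (S ^ 2 / 108) / 6 * q ^ 3
      ≤ (18 / 25) / (n + 1) := by
    have : (18 / 25) / (n + 1) = (18 / 25) * (n + 1)⁻¹ := by ring
    have hinv : 0 < (n + 1)⁻¹ := by positivity
    rw [div_eq_mul_inv _ (n + 1)] at *
    nlinarith
  have hfirst : (r / (12 * T) + 2 * (T * r / 432 + S / 216) * q ^ 2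
        + 4 * (S ^ 2 / 108) / 6 * q ^ 3) * ((n + 1) * (n + 2) * (n + 3) * (n + 4) / 4)
      ≤ (18 / 25) * ((n + 2) * (n + 3) * (n + 4) / 4) := by
    calc _ ≤ (18 / 25) / (n + 1) * ((n + 1) * (n + 2) * (n + 3) * (n + 4) / 4) := by gcongr
      _ = _ := by field_simp
  have hsecond : 9 * (2 * (T * r / 432 + S / 216)) * ((n + 1) * (n + 2) / 2)
      ≤ 9 * (2 * (7 / 864 * (n + 2))) * ((n + 1) * (n + 2) / 2) := by gcongr
  have hthird : 27 * (4 * (S ^ 2 / 108) / 6) * (n + 1)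
      ≤ 27 * (4 * ((n + 2) ^ 2 / 108) / 6) * (n + 1) := by gcongr
  have hfin : (18 / 25) * ((n + 2) * (n + 3) * (n + 4) / 4)
      + 9 * (2 * (7 / 864 * (n + 2))) * ((n + 1) * (n + 2) / 2)
      + 27 * (4 * ((n + 2) ^ 2 / 108) / 6) * (n + 1) ≤ (n + 1) * (n + 2) * (n + 3) := by
    obtain ⟨t, rfl⟩ : ∃ t, n = 1 + t := ⟨n - 1, by ring⟩
    have ht : 0 ≤ t := by linarith
    have h2 : 0 ≤ t ^ 2 := by positivity
    have h3 : 0 ≤ t ^ 3 := by positivity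
    nlinarith
  linarith

/-! ### The convergence guarantee -/

set_option maxHeartbeats 1000000 in
/-- **ε-solution guarantee for convex Decentralized Cubic Newton**
(Theorem 1, small-accuracy case). -/
theorem decentralized_cubic_newton_convex_eps_solution
    {E : Type*} [NormedAddCommGroup E] [InnerProductSpace ℝ E] [FiniteDimensional ℝ E]
    {m : ℕ} (hm : 1 ≤ m)
    (f : Fin m → E → ℝ)
    (hC2 : ∀ i, ContDiff ℝ 2 (f i))
    (hconv : ∀ i, ConvexOn ℝ Set.univ (f i))
    (L1 L2 : Fin m → ℝ)
    (hL1 : ∀ i (x y : E), ‖gradient (f i) x - gradient (f i) y‖ ≤ L1 i * ‖x - y‖)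
    (hL2 : ∀ i (x y : E), ‖hess (f i) x - hess (f i) y‖ ≤ L2 i * ‖x - y‖)
    (F : E → ℝ) (hF : F = fun x => (m : ℝ)⁻¹ * ∑ i, f i x)
    (L1bar L2bar : ℝ)
    (hL1bar : L1bar = (m : ℝ)⁻¹ * ∑ i, L1 i)
    (hL2bar : L2bar = (m : ℝ)⁻¹ * ∑ i, L2 i)
    -- a global minimizer of F
    (xstar : E) (hstar : ∀ y, F xstar ≤ F y)
    -- accuracy, radius and parameters
    (ε D L : ℝ) (hε : 0 < ε) (hD : 0 < D) (hL : L2bar ≤ L)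
    (hεsmall : ε ≤ 12 * (L + L2bar) * D ^ 3)
    (N : ℕ)
    (hN : (N : ℤ) = ⌈Real.sqrt (108 * (L + L2bar) * D ^ 3 / ε)⌉ - 2)
    (γ : ℝ) (hγ : γ = Real.sqrt (((N : ℝ) + 1) * ((N : ℝ) + 2)) / (6 * D))
    (δ1 δ2 : ℝ)
    (hδ1 : δ1 = (Real.sqrt 2 / 72) * ε / D)
    (hδ2 : δ2 = (Real.sqrt 3 / 36) * Real.sqrt (ε * (L + L2bar) / D))
    -- the trajectory
    (X : ℕ → Fin m → E)
    (xbar : ℕ → E) (hxbar : ∀ k, xbar k = (m : ℝ)⁻¹ • ∑ i, X k i)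
    (xh : ℕ → Fin m → E)
    (Δx Δg ΔH : ℕ → ℝ)
    (hxh : ∀ k ≤ N, ∀ i, ‖xh k i - xbar k‖ ≤ Δx k)
    (g : ℕ → Fin m → E)
    (hg : ∀ k ≤ N, ∀ i, ‖g k i - (m : ℝ)⁻¹ • ∑ j, gradient (f j) (xh k j)‖ ≤ Δg k)
    (H : ℕ → Fin m → E →L[ℝ] E)
    (hHsym : ∀ k ≤ N, ∀ i, ∀ v w : E, ⟪H k i v, w⟫ = ⟪v, H k i w⟫)
    (hH : ∀ k ≤ N, ∀ i, ‖H k i - (m : ℝ)⁻¹ • ∑ j, hess (f j) (xh k j)‖ ≤ ΔH k)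
    -- per-iteration bounds on the consensus errors
    (hΔg : ∀ k ≤ N, Δg k ≤ (Real.sqrt 2 / 144) * ε / D)
    (hΔH : ∀ k ≤ N, ΔH k ≤ (Real.sqrt 3 / 72) * Real.sqrt (ε * (L + L2bar) / D))
    (hΔx : ∀ k ≤ N, Δx k ≤
      min (min (Real.sqrt 2 * ε / (288 * L1bar * D))
          (Real.sqrt (3 * ε * (L + L2bar)) / (144 * L2bar * Real.sqrt D)))
        (Real.sqrt ε / (3 * Real.sqrt ((L + L2bar) * D))))
    -- each x_i^{k+1} is a global minimizer of the local cubic model ω̂_i^k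
    (ω : ℕ → Fin m → E → ℝ)
    (hω : ∀ k i y, ω k i y =
      ⟪g k i, y - xh k i⟫ + (1 / 2) * ⟪H k i (y - xh k i), y - xh k i⟫ + δ1 / (2 * γ)
        + ((γ * δ1 + δ2) / 2) * ‖y - xh k i‖ ^ 2 + (L / 6) * ‖y - xh k i‖ ^ 3)
    (hstep : ∀ k ≤ N, ∀ i, ∀ y, ω k i (X (k + 1) i) ≤ ω k i y)
    -- boundedness of the averaged trajectory
    (hDtraj : ∀ k ≤ N, ‖xbar k - xstar‖ ≤ D) :
    F (xbar (N + 1)) - F xstar ≤ ε := by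
  have hm0 : (0 : ℝ) < m := by exact_mod_cast hm
  have hminv : (0 : ℝ) ≤ (m : ℝ)⁻¹ := by positivity
  rcases subsingleton_or_nontrivial E with hE | hE
  · rw [Subsingleton.elim (xbar (N + 1)) xstar, sub_self]
    exact hε.le
  obtain ⟨u, v, huv⟩ := exists_pair_ne E
  have huv' : 0 < ‖u - v‖ := norm_pos_iff.2 (sub_ne_zero.2 huv)
  have hL1i : ∀ i, 0 ≤ L1 i := fun i =>
    nonneg_of_mul_nonneg_left ((norm_nonneg _).trans (hL1 i u v)) huv'
  have hL2i : ∀ i, 0 ≤ L2 i := fun i =>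
    nonneg_of_mul_nonneg_left ((norm_nonneg _).trans (hL2 i u v)) huv'
  have hL1b : 0 ≤ L1bar := hL1bar ▸ mul_nonneg hminv (sum_nonneg fun i _ => hL1i i)
  have hL2b : 0 ≤ L2bar := hL2bar ▸ mul_nonneg hminv (sum_nonneg fun i _ => hL2i i)
  have hD3 : 0 < D ^ 3 := by positivity
  have hM : 0 < L + L2bar := by
    by_contra hcon
    push Not at hcon
    nlinarith
  have havg : ∀ c : ℝ, (m : ℝ)⁻¹ * ∑ _i : Fin m, c = c := by
    intro c
    rw [sum_const, card_univ, Fintype.card_fin, nsmul_eq_mul]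
    field_simp
  -- the convex objective
  have hFconv : ConvexOn ℝ Set.univ F := by
    have h : ConvexOn ℝ Set.univ (∑ i, f i) := by
      refine Finset.sum_induction f (fun h => ConvexOn ℝ Set.univ h) (fun _ _ h1 h2 => h1.add h2)
        (convexOn_const 0 convex_univ) (fun i _ => hconv i)
    have hsmul := h.smul hminv
    have hFe : F = fun x => (m : ℝ)⁻¹ • (∑ i, f i) x := by
      rw [hF]; funext x; rw [Finset.sum_apply, smul_eq_mul]
    rw [hFe]
    exact hsmul
  -- Taylor estimate for the average
  have hT : ∀ z s : E, |F (z + s) - F z - ⟪(m : ℝ)⁻¹ • ∑ j, gradient (f j) z, s⟫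
      - (1 / 2) * ⟪((m : ℝ)⁻¹ • ∑ j, hess (f j) z) s, s⟫| ≤ L2bar / 6 * ‖s‖ ^ 3 := by
    intro z s
    have h1 : F (z + s) - F z - ⟪(m : ℝ)⁻¹ • ∑ j, gradient (f j) z, s⟫
        - (1 / 2) * ⟪((m : ℝ)⁻¹ • ∑ j, hess (f j) z) s, s⟫
        = (m : ℝ)⁻¹ * ∑ j, (f j (z + s) - f j z - ⟪gradient (f j) z, s⟫
          - (1 / 2) * ⟪hess (f j) z s, s⟫) := by
      simp only [hF, smul_apply, _root_.sum_apply,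
        real_inner_smul_left, sum_inner, sum_sub_distrib, ← mul_sum]
      ring
    rw [h1, abs_mul, abs_of_nonneg hminv]
    calc _ ≤ (m : ℝ)⁻¹ * ∑ j, L2 j / 6 * ‖s‖ ^ 3 := by
          gcongr
          exact (abs_sum_le_sum_abs _ _).trans
            (sum_le_sum fun j _ => taylor_two_abs_le (hC2 j) (hL2 j) z s)
      _ = L2bar / 6 * ‖s‖ ^ 3 := by
          rw [hL2bar, ← sum_mul, ← sum_div]; ring
  -- normalized parameters
  set M := L + L2bar with hMdef
  set S := Real.sqrt (108 * M * D ^ 3 / ε) with hSdef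
  have hSarg : 0 < 108 * M * D ^ 3 / ε := by positivity
  have hSpos : 0 < S := Real.sqrt_pos.2 hSarg
  have hS2 : S ^ 2 = 108 * M * D ^ 3 / ε := Real.sq_sqrt hSarg.le
  have hS3 : 3 ≤ S := by
    apply Real.le_sqrt_of_sq_le
    rw [le_div_iff₀ hε]
    nlinarith
  have hceil : (⌈S⌉ : ℤ) = (N : ℤ) + 2 := by rw [hN]; ring
  have hceilR : ((⌈S⌉ : ℤ) : ℝ) = (N : ℝ) + 2 := by rw [hceil]; push_cast; ring
  have hSle : S ≤ (N : ℝ) + 2 := hceilR ▸ Int.le_ceil S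
  have hSge : (N : ℝ) + 1 ≤ S := by
    have := Int.ceil_lt_add_one S
    rw [hceilR] at this
    linarith
  have hn1 : (1 : ℝ) ≤ N := by linarith
  set T := Real.sqrt (((N : ℝ) + 1) * ((N : ℝ) + 2)) with hTdef
  have hT1 : (N : ℝ) + 1 ≤ T := Real.le_sqrt_of_sq_le (by nlinarith)
  have hT2 : T ≤ (N : ℝ) + 2 := by
    rw [hTdef, Real.sqrt_le_left (by positivity)]; nlinarith
  have hTpos : 0 < T := by linarith
  have hγpos : 0 < γ := by rw [hγ]; positivity
  have hδ1pos : 0 < δ1 := by rw [hδ1]; positivity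
  have hδ2pos : 0 < δ2 := by rw [hδ2]; positivity
  set Δ := Real.sqrt ε / (3 * Real.sqrt (M * D)) with hΔdef
  have hΔpos : 0 < Δ := by positivity
  have hΔ2 : Δ ^ 2 = ε / (9 * (M * D)) := by
    rw [hΔdef, div_pow, mul_pow, Real.sq_sqrt hε.le, Real.sq_sqrt (by positivity)]; norm_num
  -- the displacement errors are nonnegative, which also settles the junk quotients when
  -- `L1bar` or `L2bar` vanishes
  have hΔx0 : ∀ k ≤ N, 0 ≤ Δx k := fun k hk => (norm_nonneg _).trans (hxh k hk ⟨0, hm⟩)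
  have hΔxΔ : ∀ k ≤ N, Δx k ≤ Δ := fun k hk => (hΔx k hk).trans (min_le_right _ _)
  have hgerr : ∀ k ≤ N, Δg k + 2 * L1bar * Δx k ≤ δ1 := by
    intro k hk
    have h1 := hΔg k hk
    have h2 : Δx k ≤ Real.sqrt 2 * ε / (288 * L1bar * D) :=
      (hΔx k hk).trans ((min_le_left _ _).trans (min_le_left _ _))
    have h3 : 2 * L1bar * Δx k ≤ Real.sqrt 2 / 144 * ε / D := by
      rcases hL1b.eq_or_lt with h0 | h0
      · rw [← h0]; simp only [mul_zero, zero_mul]; positivity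
      · calc _ ≤ 2 * L1bar * (Real.sqrt 2 * ε / (288 * L1bar * D)) := by gcongr
          _ = _ := by field_simp; ring
    have h4 : δ1 = Real.sqrt 2 / 144 * ε / D + Real.sqrt 2 / 144 * ε / D := by rw [hδ1]; ring
    linarith
  have hHerr : ∀ k ≤ N, ΔH k + 2 * L2bar * Δx k ≤ δ2 := by
    intro k hk
    have h1 := hΔH k hk
    have h2 : Δx k ≤ Real.sqrt (3 * ε * M) / (144 * L2bar * Real.sqrt D) :=
      (hΔx k hk).trans ((min_le_left _ _).trans (min_le_right _ _))
    have hs : Real.sqrt (3 * ε * M) = Real.sqrt 3 * Real.sqrt (ε * M) := by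
      rw [mul_assoc, Real.sqrt_mul (by norm_num)]
    have h3 : 2 * L2bar * Δx k ≤ Real.sqrt 3 / 72 * Real.sqrt (ε * M / D) := by
      rcases hL2b.eq_or_lt with h0 | h0
      · rw [← h0]; simp only [mul_zero, zero_mul]; positivity
      · calc _ ≤ 2 * L2bar * (Real.sqrt (3 * ε * M) / (144 * L2bar * Real.sqrt D)) := by gcongr
          _ = _ := by
            rw [hs, Real.sqrt_div (by positivity)]
            have : 0 < Real.sqrt D := Real.sqrt_pos.2 hD
            field_simp; ring
    have h4 : δ2 = Real.sqrt 3 / 72 * Real.sqrt (ε * M / D)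
        + Real.sqrt 3 / 72 * Real.sqrt (ε * M / D) := by rw [hδ2]; ring
    linarith
  have hxx : ∀ k ≤ N, ∀ i j, ‖xh k j - xh k i‖ ≤ 2 * Δx k := by
    intro k hk i j
    calc ‖xh k j - xh k i‖ = ‖(xh k j - xbar k) - (xh k i - xbar k)‖ := by congr 1; abel
      _ ≤ ‖xh k j - xbar k‖ + ‖xh k i - xbar k‖ := norm_sub_le _ _
      _ ≤ 2 * Δx k := by linarith [hxh k hk i, hxh k hk j]
  have hgtot : ∀ k ≤ N, ∀ i, ‖g k i - (m : ℝ)⁻¹ • ∑ j, gradient (f j) (xh k i)‖ ≤ δ1 := by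
    intro k hk i
    have h1 : ‖(m : ℝ)⁻¹ • ∑ j, gradient (f j) (xh k j)
        - (m : ℝ)⁻¹ • ∑ j, gradient (f j) (xh k i)‖ ≤ 2 * L1bar * Δx k := by
      rw [← smul_sub, ← sum_sub_distrib, norm_smul, Real.norm_of_nonneg hminv]
      calc _ ≤ (m : ℝ)⁻¹ * ∑ j, L1 j * (2 * Δx k) := by
            gcongr
            refine norm_sum_le_of_le _ fun j _ => (hL1 j _ _).trans ?_
            exact mul_le_mul_of_nonneg_left (hxx k hk i j) (hL1i j)
        _ = _ := by rw [← sum_mul, hL1bar]; ring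
    calc _ ≤ _ := norm_sub_le_norm_sub_add_norm_sub _
          ((m : ℝ)⁻¹ • ∑ j, gradient (f j) (xh k j)) _
      _ ≤ δ1 := by linarith [hg k hk i, hgerr k hk]
  have hHtot : ∀ k ≤ N, ∀ i, ‖H k i - (m : ℝ)⁻¹ • ∑ j, hess (f j) (xh k i)‖ ≤ δ2 := by
    intro k hk i
    have h1 : ‖(m : ℝ)⁻¹ • ∑ j, hess (f j) (xh k j)
        - (m : ℝ)⁻¹ • ∑ j, hess (f j) (xh k i)‖ ≤ 2 * L2bar * Δx k := by
      rw [← smul_sub, ← sum_sub_distrib, norm_smul, Real.norm_of_nonneg hminv]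
      calc _ ≤ (m : ℝ)⁻¹ * ∑ j, L2 j * (2 * Δx k) := by
            gcongr
            refine norm_sum_le_of_le _ fun j _ => (hL2 j _ _).trans ?_
            exact mul_le_mul_of_nonneg_left (hxx k hk i j) (hL2i j)
        _ = _ := by rw [← sum_mul, hL2bar]; ring
    calc _ ≤ _ := norm_sub_le_norm_sub_add_norm_sub _
          ((m : ℝ)⁻¹ • ∑ j, hess (f j) (xh k j)) _
      _ ≤ δ2 := by linarith [hH k hk i, hHerr k hk]
  -- one step, with competitor on the segment from `xbar k` to `xstar`
  have hrec : ∀ k ≤ N, F (xbar (k + 1)) - F xstar ≤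
      (1 - 3 / ((k : ℝ) + 3)) * (F (xbar k) - F xstar)
        + (δ1 / γ + 2 * (γ * δ1 + δ2) * Δ ^ 2 + 4 * M / 6 * Δ ^ 3)
        + 2 * (γ * δ1 + δ2) * D ^ 2 * (3 / ((k : ℝ) + 3)) ^ 2
        + 4 * M / 6 * D ^ 3 * (3 / ((k : ℝ) + 3)) ^ 3 := by
    intro k hk
    have hk0 : (0 : ℝ) ≤ k := Nat.cast_nonneg k
    set α : ℝ := 3 / ((k : ℝ) + 3) with hα
    have hα0 : 0 ≤ α := by positivity
    have hα1 : α ≤ 1 := by rw [hα, div_le_one (by positivity)]; linarith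
    set y := (1 - α) • xbar k + α • xstar with hy
    have hFy : F y ≤ (1 - α) * F (xbar k) + α * F xstar :=
      hFconv.2 (Set.mem_univ _) (Set.mem_univ _) (by linarith) hα0 (by ring)
    have hnode : ∀ i, F (X (k + 1) i) ≤ F y + δ1 / γ + (γ * δ1 + δ2) * (α * D + Δ) ^ 2
        + M / 6 * (α * D + Δ) ^ 3 := by
      intro i
      have hyn : ‖y - xh k i‖ ≤ α * D + Δ := by
        have e : y - xh k i = α • (xstar - xbar k) - (xh k i - xbar k) := by
          rw [hy]; module
        rw [e]
        refine (norm_sub_le _ _).trans (add_le_add ?_ ((hxh k hk i).trans (hΔxΔ k hk)))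
        rw [norm_smul, Real.norm_of_nonneg hα0, norm_sub_rev]
        exact mul_le_mul_of_nonneg_left (hDtraj k hk) hα0
      have h := cubic_step_le (hT (xh k i)) (hgtot k hk i) (hHtot k hk i) hγpos hL
        (hω k i) (hstep k hk i) y
      refine h.trans ?_
      gcongr
    have hjensen : F (xbar (k + 1)) ≤ (m : ℝ)⁻¹ * ∑ i, F (X (k + 1) i) := by
      have h := hFconv.map_sum_le (t := univ) (w := fun _ : Fin m => (m : ℝ)⁻¹)
        (p := fun i => X (k + 1) i) (fun _ _ => hminv)
        (by simp [hm0.ne']) (fun _ _ => Set.mem_univ _)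
      simpa [hxbar, smul_sum, mul_sum] using h
    have hall : F (xbar (k + 1)) ≤ F y + δ1 / γ + (γ * δ1 + δ2) * (α * D + Δ) ^ 2
        + M / 6 * (α * D + Δ) ^ 3 := by
      refine hjensen.trans ?_
      rw [← havg (F y + δ1 / γ + (γ * δ1 + δ2) * (α * D + Δ) ^ 2 + M / 6 * (α * D + Δ) ^ 3)]
      gcongr with i
      exact hnode i
    have hαD : 0 ≤ α * D := by positivity
    have hsq : (α * D + Δ) ^ 2 ≤ 2 * ((α * D) ^ 2 + Δ ^ 2) := by
      nlinarith [sq_nonneg (α * D - Δ)]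
    have hcube : (α * D + Δ) ^ 3 ≤ 4 * ((α * D) ^ 3 + Δ ^ 3) := by
      have h := mul_nonneg (add_nonneg hαD hΔpos.le) (sq_nonneg (α * D - Δ))
      linear_combination 3 * h
    have hc2 : 0 ≤ γ * δ1 + δ2 := by positivity
    have m2 := mul_le_mul_of_nonneg_left hsq hc2
    have m3 := mul_le_mul_of_nonneg_left hcube (by positivity : 0 ≤ M / 6)
    have : 2 * (γ * δ1 + δ2) * D ^ 2 * α ^ 2 + 4 * M / 6 * D ^ 3 * α ^ 3
        + 2 * (γ * δ1 + δ2) * Δ ^ 2 + 4 * M / 6 * Δ ^ 3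
        = (γ * δ1 + δ2) * (2 * ((α * D) ^ 2 + Δ ^ 2))
          + M / 6 * (4 * ((α * D) ^ 3 + Δ ^ 3)) := by ring
    linarith
  have hsum := weighted_recursion (a := fun k => F (xbar k) - F xstar) (by positivity)
    (by positivity) hrec N le_rfl
  -- express every error term as a multiple of `ε`
  have e1 : δ1 / γ = ε * (Real.sqrt 2 / (12 * T)) := by
    rw [hδ1, hγ]; field_simp; norm_num
  have e2 : γ * δ1 * D ^ 2 = ε * (T * Real.sqrt 2 / 432) := by
    rw [hδ1, hγ]; field_simp; norm_num
  have e3 : δ2 * D ^ 2 = ε * (S / 216) := by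
    have h36 : Real.sqrt 3 * Real.sqrt (ε * M / D) * D ^ 2 = ε * S / 6 := by
      rw [← sq_eq_sq₀ (by positivity) (by positivity), mul_pow, mul_pow, div_pow, mul_pow, hS2,
        Real.sq_sqrt (by norm_num), Real.sq_sqrt (by positivity)]
      field_simp; norm_num
    rw [hδ2]
    linear_combination h36 / 36
  have e4 : M * D ^ 3 = ε * (S ^ 2 / 108) := by rw [hS2]; field_simp
  have hq : (Δ / D) ^ 2 * S ^ 2 = 12 := by
    rw [div_pow, hΔ2, hS2]; field_simp; norm_num
  have hr : Real.sqrt 2 ≤ 3 / 2 := by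
    rw [Real.sqrt_le_left (by norm_num)]; norm_num
  have hfin := final_numeric hn1 hSge hSle hT1 hT2 (Real.sqrt_nonneg 2) hr
    (by positivity : 0 ≤ Δ / D) hq
  have e5 : 2 * (γ * δ1 + δ2) * D ^ 2 = ε * (2 * (T * Real.sqrt 2 / 432 + S / 216)) := by
    linear_combination 2 * e2 + 2 * e3
  have e6 : δ1 / γ + 2 * (γ * δ1 + δ2) * Δ ^ 2 + 4 * M / 6 * Δ ^ 3
      = ε * (Real.sqrt 2 / (12 * T) + 2 * (T * Real.sqrt 2 / 432 + S / 216) * (Δ / D) ^ 2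
        + 4 * (S ^ 2 / 108) / 6 * (Δ / D) ^ 3) := by
    have a1 : 2 * (γ * δ1 + δ2) * Δ ^ 2 = (2 * (γ * δ1 + δ2) * D ^ 2) * (Δ / D) ^ 2 := by
      field_simp
    have a2 : 4 * M / 6 * Δ ^ 3 = 4 / 6 * (M * D ^ 3) * (Δ / D) ^ 3 := by
      field_simp
    rw [a1, a2, e1, e5, e4]; ring
  have e7 : 4 * M / 6 * D ^ 3 = ε * (4 * (S ^ 2 / 108) / 6) := by
    linear_combination 4 / 6 * e4
  rw [e5, e6, e7] at hsum
  have hw : 0 < ((N : ℝ) + 1) * (N + 2) * (N + 3) := by positivity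
  have hfinε := mul_le_mul_of_nonneg_left hfin hε.le
  refine le_of_mul_le_mul_left ?_ hw
  calc _ ≤ _ := hsum
    _ = _ := by ring
    _ ≤ _ := hfinε
    _ = _ := by ring
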